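/- In a finite-horizon perception–action loop with entity-set 𝔈^PA, let m_{0:n} be a memory trajectory and t < n. Two co-perception environments ê, ē ∈ 𝓔_t of m_{0:n} at t lie in the same block of the co-perception environment partition π^𝔖(m_{0:n},t) (i.e., induce equal branch-morphs over the branching partition η(m_{0:n},t)) if and only if f_t(m_t, ê)(m') = f_t(m_t, ē)(m') for all m' ∈ 𝓜_{t+1}. Hence the perceptions of m_{0:n} at t are exactly the blocks, restricted to the co-perception environments, of the sensor equivalence relation with the agent state fixed to m_t. -/

import Mathlib

/-!
On a co-perception environment `e` the branch-morph is nothing but the kernel `f_t(m_t, e)`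
(`branchMorph_eq`), so two branch-morphs agree iff the two kernels do. Indeed the branch value of
`m'` is `P(M_{0:t} = m_{0:t}, E_t = e, M_{t+1} = m') / P(M_{0:t} = m_{0:t})` (`branchNum_eq`).
Summing out the times `n, n-1, …, t+2` one after another, which costs nothing because `f` and `g`
are normalized, and then `E_{t+1}`, shows that the numerator is `A * f_t(m_t, e)(m')` with `A`
independent of `m'` (`margHistEM_factor`). Since `f_t(m_t, e)` sums to `1`, `A` equals
`P(M_{0:t} = m_{0:t}, E_t = e)`, which is positive, and the normalization of the branch-morph
cancels both `A` and `P(M_{0:t} = m_{0:t})`.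
-/

open Classical

/-- A trajectory of a time-indexed family of state spaces over the horizon `0,…,n`. -/
abbrev PATraj (M : ℕ → Type) (n : ℕ) := ∀ t : Fin (n+1), M t.val

/-- The joint distribution of the finite-horizon perception–action loop:
`p(m_0,e_0,…,m_n,e_n) = p_0(m_0,e_0) · ∏_{t<n} f_t(m_t,e_t)(m_{t+1}) · g_t(m_t,e_t)(e_{t+1})`. -/
noncomputable def paJoint (n : ℕ) (M E : ℕ → Type)
    (p0 : M 0 → E 0 → ℝ)
    (f : ∀ t, M t → E t → M (t+1) → ℝ)
    (g : ∀ t, M t → E t → E (t+1) → ℝ)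
    (m : PATraj M n) (e : PATraj E n) : ℝ :=
  p0 (m ⟨0, Nat.succ_pos n⟩) (e ⟨0, Nat.succ_pos n⟩) *
    ∏ t : Fin n,
      (f t.val (m t.castSucc) (e t.castSucc) (m t.succ) *
       g t.val (m t.castSucc) (e t.castSucc) (e t.succ))

/-- Marginal probability `P(M_0 = mh_0, …, M_t = mh_t, E_t = e)` of a memory history
together with the current environment state. -/
noncomputable def margHistE (n : ℕ) (M E : ℕ → Type)
    [∀ t, Fintype (M t)] [∀ t, Fintype (E t)]
    (p0 : M 0 → E 0 → ℝ)
    (f : ∀ t, M t → E t → M (t+1) → ℝ)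
    (g : ∀ t, M t → E t → E (t+1) → ℝ)
    (t : ℕ) (ht : t < n) (mh : PATraj M n) (e : E t) : ℝ :=
  ∑ mm : PATraj M n, ∑ ee : PATraj E n,
    if (∀ s : Fin (n+1), s.val ≤ t → mm s = mh s) ∧ ee ⟨t, by omega⟩ = e then
      paJoint n M E p0 f g mm ee else 0

/-- Marginal probability `P(M_{t+1} = m', M_0 = mh_0, …, M_t = mh_t, E_t = e)`. -/
noncomputable def margHistEM (n : ℕ) (M E : ℕ → Type)
    [∀ t, Fintype (M t)] [∀ t, Fintype (E t)]
    (p0 : M 0 → E 0 → ℝ)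
    (f : ∀ t, M t → E t → M (t+1) → ℝ)
    (g : ∀ t, M t → E t → E (t+1) → ℝ)
    (t : ℕ) (ht : t < n) (mh : PATraj M n) (e : E t) (m' : M (t+1)) : ℝ :=
  ∑ mm : PATraj M n, ∑ ee : PATraj E n,
    if (∀ s : Fin (n+1), s.val ≤ t → mm s = mh s) ∧ ee ⟨t, by omega⟩ = e ∧
       mm ⟨t+1, by omega⟩ = m' then
      paJoint n M E p0 f g mm ee else 0


/-- Marginal probability `P(M_0 = mh_0, …, M_t = mh_t)` of a memory history. -/
noncomputable def margHist (n : ℕ) (M E : ℕ → Type)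
    [∀ t, Fintype (M t)] [∀ t, Fintype (E t)]
    (p0 : M 0 → E 0 → ℝ)
    (f : ∀ t, M t → E t → M (t+1) → ℝ)
    (g : ∀ t, M t → E t → E (t+1) → ℝ)
    (t : ℕ) (mh : PATraj M n) : ℝ :=
  ∑ mm : PATraj M n, ∑ ee : PATraj E n,
    if (∀ s : Fin (n+1), s.val ≤ t → mm s = mh s) then
      paJoint n M E p0 f g mm ee else 0

/-- The unnormalized branch value `p(b(m̄) | e, m_{0:t})`: the sum, over all memory
trajectories `m̂` in the block `b(m̄)` (agreeing with `mh` up to `t` and equal to `m̄` at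
`t+1`), of `P(M_{t+1:n} = m̂_{t+1:n}, E_t = e | M_{0:t} = mh_{0:t})`. -/
noncomputable def branchNum (n : ℕ) (M E : ℕ → Type)
    [∀ t, Fintype (M t)] [∀ t, Fintype (E t)]
    (p0 : M 0 → E 0 → ℝ)
    (f : ∀ t, M t → E t → M (t+1) → ℝ)
    (g : ∀ t, M t → E t → E (t+1) → ℝ)
    (t : ℕ) (ht : t < n) (mh : PATraj M n) (e : E t) (mbar : M (t+1)) : ℝ :=
  ∑ mhat : PATraj M n,
    if (∀ s : Fin (n+1), s.val ≤ t → mhat s = mh s) ∧ mhat ⟨t+1, by omega⟩ = mbar then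
      (∑ ee : PATraj E n, if ee ⟨t, by omega⟩ = e then paJoint n M E p0 f g mhat ee else 0) /
        margHist n M E p0 f g t mh
    else 0

/-- The branch-morph: the branch values normalized by their sum over all blocks
(the blocks `b(m̄)` of the branching partition are indexed exactly by `m̄ ∈ 𝓜_{t+1}`). -/
noncomputable def branchMorph (n : ℕ) (M E : ℕ → Type)
    [∀ t, Fintype (M t)] [∀ t, Fintype (E t)]
    (p0 : M 0 → E 0 → ℝ)
    (f : ∀ t, M t → E t → M (t+1) → ℝ)
    (g : ∀ t, M t → E t → E (t+1) → ℝ)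
    (t : ℕ) (ht : t < n) (mh : PATraj M n) (e : E t) (mbar : M (t+1)) : ℝ :=
  branchNum n M E p0 f g t ht mh e mbar /
    ∑ mbar' : M (t+1), branchNum n M E p0 f g t ht mh e mbar'
/-- The trajectory over the horizon `0,…,n` obtained by dropping the last state. -/
def PATraj.init {M : ℕ → Type} {n : ℕ} (m : PATraj M (n+1)) : PATraj M n :=
  fun s => m s.castSucc

theorem paJoint_succ (n : ℕ) (M E : ℕ → Type)
    (p0 : M 0 → E 0 → ℝ)
    (f : ∀ t, M t → E t → M (t+1) → ℝ)
    (g : ∀ t, M t → E t → E (t+1) → ℝ)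
    (m : PATraj M (n+1)) (e : PATraj E (n+1)) :
    paJoint (n+1) M E p0 f g m e =
      paJoint n M E p0 f g m.init e.init *
        (f n (m.init (Fin.last n)) (e.init (Fin.last n)) (m (Fin.last (n+1))) *
         g n (m.init (Fin.last n)) (e.init (Fin.last n)) (e (Fin.last (n+1)))) := by
  unfold paJoint
  rw [Fin.prod_univ_castSucc, ← mul_assoc]
  rfl

theorem sum_traj_succ {M : ℕ → Type} [∀ t, Fintype (M t)] (n : ℕ)
    (F : PATraj M n → M (n+1) → ℝ) :
    ∑ m : PATraj M (n+1), F m.init (m (Fin.last (n+1))) =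
      ∑ m : PATraj M n, ∑ x : M (n+1), F m x := by
  rw [← (Fin.snocEquiv (fun s : Fin (n+1+1) => M s.val)).sum_comp, Fintype.sum_prod_type,
    Finset.sum_comm]
  refine Finset.sum_congr rfl fun m _ => Finset.sum_congr rfl fun x _ => ?_
  have h1 : PATraj.init (M := M) (Fin.snocEquiv (fun s : Fin (n+1+1) => M s.val) (x, m)) = m := by
    funext s
    exact Fin.snoc_castSucc (α := fun s : Fin (n+1+1) => M s.val) x m s
  have h2 : Fin.snocEquiv (fun s : Fin (n+1+1) => M s.val) (x, m) (Fin.last (n+1)) = x :=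
    Fin.snoc_last (α := fun s : Fin (n+1+1) => M s.val) x m
  rw [h1, h2]

/-- Marginalizing out the last step of the loop. The environment kernel `g n` sums to `1`, so a
weight `φ` on the past and a weight `ψ` on the last memory state leave only the `ψ`-average
against `f n`. -/
theorem sum_paJoint_succ (n : ℕ) (M E : ℕ → Type)
    [∀ t, Fintype (M t)] [∀ t, Fintype (E t)]
    (p0 : M 0 → E 0 → ℝ)
    (f : ∀ t, M t → E t → M (t+1) → ℝ)
    (g : ∀ t, M t → E t → E (t+1) → ℝ)
    (hgsum : ∀ t m e, ∑ e', g t m e e' = 1)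
    (φ : PATraj M n → PATraj E n → ℝ) (ψ : M (n+1) → ℝ) :
    ∑ m : PATraj M (n+1), ∑ e : PATraj E (n+1),
        φ m.init e.init * ψ (m (Fin.last (n+1))) * paJoint (n+1) M E p0 f g m e =
      ∑ m : PATraj M n, ∑ e : PATraj E n, φ m e * paJoint n M E p0 f g m e *
        ∑ x : M (n+1), ψ x * f n (m (Fin.last n)) (e (Fin.last n)) x := by
  have h : ∀ m : PATraj M (n+1), ∑ e : PATraj E (n+1),
      φ m.init e.init * ψ (m (Fin.last (n+1))) * paJoint (n+1) M E p0 f g m e =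
      ∑ e : PATraj E n, φ m.init e * paJoint n M E p0 f g m.init e *
        (ψ (m (Fin.last (n+1))) *
          f n (m.init (Fin.last n)) (e (Fin.last n)) (m (Fin.last (n+1)))) := by
    intro m
    simp only [paJoint_succ]
    rw [sum_traj_succ n (fun e y => φ m.init e * ψ (m (Fin.last (n+1))) *
      (paJoint n M E p0 f g m.init e *
        (f n (m.init (Fin.last n)) (e (Fin.last n)) (m (Fin.last (n+1))) *
         g n (m.init (Fin.last n)) (e (Fin.last n)) y)))]
    refine Finset.sum_congr rfl fun e _ => ?_
    simp only [← Finset.mul_sum]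
    erw [hgsum]
    ring
  simp only [h]
  rw [sum_traj_succ n (fun m x => ∑ e : PATraj E n, φ m e * paJoint n M E p0 f g m e *
        (ψ x * f n (m (Fin.last n)) (e (Fin.last n)) x))]
  refine Finset.sum_congr rfl fun m _ => ?_
  rw [Finset.sum_comm]
  simp only [Finset.mul_sum]

/-- The Markov property at time `t`: the joint probability of the memory history, the environment
state `e` and the next memory state `m'` depends on `m'` only through the factor
`f_t(m_t, e)(m')`. -/
theorem margHistEM_factor (n : ℕ) (M E : ℕ → Type)
    [∀ t, Fintype (M t)] [∀ t, Fintype (E t)]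
    (p0 : M 0 → E 0 → ℝ)
    (f : ∀ t, M t → E t → M (t+1) → ℝ)
    (g : ∀ t, M t → E t → E (t+1) → ℝ)
    (hfsum : ∀ t m e, ∑ m', f t m e m' = 1)
    (hgsum : ∀ t m e, ∑ e', g t m e e' = 1)
    (t : ℕ) (ht : t < n) (mh : PATraj M n) (e : E t) :
    ∃ A : ℝ, ∀ m' : M (t+1), margHistEM n M E p0 f g t ht mh e m' =
      A * f t (mh ⟨t, by omega⟩) e m' := by
  induction n, (show t + 1 ≤ n from ht) using Nat.le_induction with
  | base =>
    refine ⟨∑ m : PATraj M t, ∑ ee : PATraj E t,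
      (if (∀ s : Fin (t+1), m s = mh s.castSucc) ∧ ee (Fin.last t) = e then 1 else 0) *
        paJoint t M E p0 f g m ee, fun m' => ?_⟩
    have key := sum_paJoint_succ t M E p0 f g hgsum
      (fun m ee => if (∀ s : Fin (t+1), m s = mh s.castSucc) ∧ ee (Fin.last t) = e
        then 1 else 0) (fun x => if x = m' then 1 else 0)
    have hl : margHistEM (t+1) M E p0 f g t ht mh e m' = _ := Eq.trans ?_ key
    · rw [hl]
      simp only [Finset.sum_mul]
      refine Finset.sum_congr rfl fun m _ => Finset.sum_congr rfl fun ee _ => ?_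
      simp only [ite_mul, one_mul, zero_mul, Finset.sum_ite_eq', Finset.mem_univ, if_true]
      split_ifs with h
      · rw [h.1, h.2]
        rfl
      · rfl
    · unfold margHistEM
      refine Finset.sum_congr rfl fun m _ => Finset.sum_congr rfl fun ee _ => ?_
      have h1 : (∀ s : Fin (t+1+1), s.val ≤ t → m s = mh s) ↔
          ∀ s : Fin (t+1), m.init s = mh s.castSucc :=
        ⟨fun h s => h s.castSucc (Nat.lt_succ_iff.mp s.2),
         fun h s hs => h ⟨s.val, Nat.lt_succ_of_le hs⟩⟩
      rw [ite_zero_mul_ite_zero, ite_mul, mul_one, one_mul, zero_mul]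
      exact if_congr ((and_congr_left' h1).trans and_assoc.symm) rfl rfl
  | succ n hn ih =>
    obtain ⟨A, hA⟩ := ih hn mh.init
    refine ⟨A, fun m' => Eq.trans ?_ (hA m')⟩
    have key := sum_paJoint_succ n M E p0 f g hgsum
      (fun m ee => if (∀ s : Fin (n+1), s.val ≤ t → m s = mh.init s) ∧
        ee ⟨t, by omega⟩ = e ∧ m ⟨t+1, by omega⟩ = m' then 1 else 0) (fun _ => 1)
    simp only [one_mul, hfsum, mul_one] at key
    refine Eq.trans ?_ (key.trans ?_)
    · unfold margHistEM
      refine Finset.sum_congr rfl fun m _ => Finset.sum_congr rfl fun ee _ => ?_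
      have h1 : (∀ s : Fin (n+1+1), s.val ≤ t → m s = mh s) ↔
          ∀ s : Fin (n+1), s.val ≤ t → m.init s = mh.init s :=
        ⟨fun h s hs => h s.castSucc hs,
         fun h s hs => h ⟨s.val, by omega⟩ hs⟩
      rw [ite_mul, one_mul, zero_mul]
      exact if_congr (and_congr_left' h1) rfl rfl
    · unfold margHistEM
      simp only [ite_mul, one_mul, zero_mul]

theorem sum_margHistEM (n : ℕ) (M E : ℕ → Type)
    [∀ t, Fintype (M t)] [∀ t, Fintype (E t)]
    (p0 : M 0 → E 0 → ℝ)
    (f : ∀ t, M t → E t → M (t+1) → ℝ)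
    (g : ∀ t, M t → E t → E (t+1) → ℝ)
    (t : ℕ) (ht : t < n) (mh : PATraj M n) (e : E t) :
    ∑ m' : M (t+1), margHistEM n M E p0 f g t ht mh e m' =
      margHistE n M E p0 f g t ht mh e := by
  unfold margHistEM margHistE
  rw [Finset.sum_comm]
  refine Finset.sum_congr rfl fun m _ => ?_
  rw [Finset.sum_comm]
  refine Finset.sum_congr rfl fun ee _ => ?_
  simp only [ite_and, Finset.sum_ite_irrel, Finset.sum_const_zero, Finset.sum_ite_eq,
    Finset.mem_univ, if_true]

theorem branchNum_eq (n : ℕ) (M E : ℕ → Type)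
    [∀ t, Fintype (M t)] [∀ t, Fintype (E t)]
    (p0 : M 0 → E 0 → ℝ)
    (f : ∀ t, M t → E t → M (t+1) → ℝ)
    (g : ∀ t, M t → E t → E (t+1) → ℝ)
    (t : ℕ) (ht : t < n) (mh : PATraj M n) (e : E t) (m' : M (t+1)) :
    branchNum n M E p0 f g t ht mh e m' =
      margHistEM n M E p0 f g t ht mh e m' / margHist n M E p0 f g t mh := by
  unfold branchNum margHistEM
  rw [Finset.sum_div]
  refine Finset.sum_congr rfl fun m _ => ?_
  by_cases h : (∀ s : Fin (n+1), s.val ≤ t → m s = mh s) ∧ m ⟨t+1, by omega⟩ = m'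
  · rw [if_pos h]
    congr 1
    refine Finset.sum_congr rfl fun ee _ => if_congr ?_ rfl rfl
    exact ⟨fun he => ⟨h.1, he, h.2⟩, fun hh => hh.2.1⟩
  · rw [if_neg h]
    have h' : ∀ ee : PATraj E n, ¬ ((∀ s : Fin (n+1), s.val ≤ t → m s = mh s) ∧
        ee ⟨t, by omega⟩ = e ∧ m ⟨t+1, by omega⟩ = m') := fun ee hh => h ⟨hh.1, hh.2.2⟩
    simp only [h', if_false, Finset.sum_const_zero, zero_div]

/-- A history that is compatible with some environment state has positive probability, so that the
conditioning in `branchNum` is not a division by zero. -/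
theorem margHist_pos (n : ℕ) (M E : ℕ → Type)
    [∀ t, Fintype (M t)] [∀ t, Fintype (E t)]
    (p0 : M 0 → E 0 → ℝ)
    (f : ∀ t, M t → E t → M (t+1) → ℝ)
    (g : ∀ t, M t → E t → E (t+1) → ℝ)
    (hp0 : ∀ a b, 0 ≤ p0 a b)
    (hf : ∀ t m e m', 0 ≤ f t m e m') (hg : ∀ t m e e', 0 ≤ g t m e e')
    (t : ℕ) (ht : t < n) (mh : PATraj M n) (e : E t)
    (hco : 0 < margHistE n M E p0 f g t ht mh e) :
    0 < margHist n M E p0 f g t mh := by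
  refine hco.trans_le ?_
  unfold margHistE margHist
  refine Finset.sum_le_sum fun m _ => Finset.sum_le_sum fun ee _ => ?_
  have hJ : 0 ≤ paJoint n M E p0 f g m ee :=
    mul_nonneg (hp0 _ _) (Finset.prod_nonneg fun s _ => mul_nonneg (hf _ _ _ _) (hg _ _ _ _))
  split_ifs with h1 h2 h2
  · exact le_rfl
  · exact absurd h1.1 h2
  · exact hJ
  · exact le_rfl

/-- On a co-perception environment the branch-morph is the sensor kernel itself. -/
theorem branchMorph_eq (n : ℕ) (M E : ℕ → Type)
    [∀ t, Fintype (M t)] [∀ t, Fintype (E t)]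
    (p0 : M 0 → E 0 → ℝ)
    (f : ∀ t, M t → E t → M (t+1) → ℝ)
    (g : ∀ t, M t → E t → E (t+1) → ℝ)
    (hp0 : ∀ a b, 0 ≤ p0 a b)
    (hf : ∀ t m e m', 0 ≤ f t m e m') (hfsum : ∀ t m e, ∑ m', f t m e m' = 1)
    (hg : ∀ t m e e', 0 ≤ g t m e e') (hgsum : ∀ t m e, ∑ e', g t m e e' = 1)
    (t : ℕ) (ht : t < n) (mh : PATraj M n) (e : E t)
    (hco : 0 < margHistE n M E p0 f g t ht mh e) (m' : M (t+1)) :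
    branchMorph n M E p0 f g t ht mh e m' = f t (mh ⟨t, by omega⟩) e m' := by
  obtain ⟨A, hA⟩ := margHistEM_factor n M E p0 f g hfsum hgsum t ht mh e
  have hH := (margHist_pos n M E p0 f g hp0 hf hg t ht mh e hco).ne'
  have hsum := sum_margHistEM n M E p0 f g t ht mh e
  simp only [hA, ← Finset.mul_sum, hfsum, mul_one] at hsum
  have hA0 : A ≠ 0 := by
    rw [hsum]
    exact hco.ne'
  unfold branchMorph
  simp only [branchNum_eq, ← Finset.sum_div, hA, ← Finset.mul_sum, hfsum, mul_one]
  field_simp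

/-- Two co-perception environments `ê, ē ∈ 𝓔_t` of the memory trajectory `mh` at time `t`
induce equal branch-morphs on the branching partition (i.e. lie in the same block of the
co-perception environment partition, a perception of `mh` at `t`) if and only if
`f_t(mh_t, ê) = f_t(mh_t, ē)`, i.e. iff they are equivalent under the sensor equivalence
relation with the agent state fixed to `mh_t`. -/
theorem perception_iff_sensor_equivalence
    (n : ℕ) (M E : ℕ → Type)
    [∀ t, Fintype (M t)] [∀ t, Fintype (E t)]
    [∀ t, Nonempty (M t)] [∀ t, Nonempty (E t)]
    (p0 : M 0 → E 0 → ℝ)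
    (f : ∀ t, M t → E t → M (t+1) → ℝ)
    (g : ∀ t, M t → E t → E (t+1) → ℝ)
    (hp0 : ∀ a b, 0 ≤ p0 a b) (hp0sum : ∑ a, ∑ b, p0 a b = 1)
    (hf : ∀ t m e m', 0 ≤ f t m e m') (hfsum : ∀ t m e, ∑ m', f t m e m' = 1)
    (hg : ∀ t m e e', 0 ≤ g t m e e') (hgsum : ∀ t m e, ∑ e', g t m e e' = 1)
    (t : ℕ) (ht : t < n) (mh : PATraj M n) (ehat ebar : E t)
    (hcohat : 0 < margHistE n M E p0 f g t ht mh ehat)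
    (hcobar : 0 < margHistE n M E p0 f g t ht mh ebar) :
    (∀ mbar : M (t+1),
        branchMorph n M E p0 f g t ht mh ehat mbar =
          branchMorph n M E p0 f g t ht mh ebar mbar) ↔
      (∀ m' : M (t+1),
        f t (mh ⟨t, by omega⟩) ehat m' = f t (mh ⟨t, by omega⟩) ebar m') := by
  have hhat := branchMorph_eq n M E p0 f g hp0 hf hfsum hg hgsum t ht mh ehat hcohat
  have hbar := branchMorph_eq n M E p0 f g hp0 hf hfsum hg hgsum t ht mh ebar hcobar
  simp only [hhat, hbar]
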